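/- arXiv:2405.09196 — 2 statements merged into one kernel-verified Lean document; each statement's English description precedes it below -/
import Mathlib

section
/- Assume M is independent of (X,Y) (MCAR), the balanced LDA model (Σ positive definite, P(Y=1)=P(Y=−1)=1/2, X | Y=k ~ N(μ_k, Σ) for k ∈ {−1,1}), all patterns m ∈ {0,1}^d admissible, and d ≥ 3. Then a constant imputation strategy followed by a linear classifier (i.e., a classifier of the form z = (x_{obs(m)}, m) ↦ sign(γ₀ + Σ_{j=1}^d γ_j (x_j 1_{m_j=0} + α_j 1_{m_j=1})) for some α ∈ ℝ^d, γ ∈ ℝ^d, γ₀ ∈ ℝ) can be Bayes optimal for all values of μ₋₁ and μ₁ if and only if Σ is diagonal; and in that case the optimal imputation constants are α_j = (μ_{1,j} + μ_{−1,j})/2 for all 1 ≤ j ≤ d. -/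
/-! The risk is a `ν`-weighted sum over missing patterns (`ldaRisk_eq`). On a pattern `m`, a
classifier does not see a change of the class means in the missing coordinates. So if `e` is
supported on the observed coordinates and `(C e) j = μpos j - μneg j` for `j` observed, `μpos` may
be replaced by `μneg + C e`; the log-likelihood ratio is then the affine function
`∑ j, e j * (x j - (μpos j + μneg j) / 2)` of the observed coordinates, and no marginal of the
Gaussian has to be computed. Its sign is optimal on `m` (`bayes_opt`) and almost everywhere the
only optimal choice (`bayes_unique`).

If `C` is diagonal, `e j = (μpos j - μneg j) / C j j` on the observed coordinates works for all
patterns at once, so a single linear classifier with imputation by `(μpos j + μneg j) / 2` is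
optimal. Conversely, optimality forces `γ j` to have the sign of the Bayes coefficient `e j` on
every pattern observing `j` (`opt_direction`). If `C i j ≠ 0`, taking `μpos - μneg = C e` with
`e j < 0 < (C e) j` gives opposite signs for the full pattern, where the coefficient is `e j`, and
for the pattern observing `j` alone, where it is `(C e) j / C j j`. -/

open MeasureTheory ProbabilityTheory Matrix

/-- The sign function: `1` if `0 ≤ t`, `-1` otherwise. -/
noncomputable def sgn (t : ℝ) : ℝ := if 0 ≤ t then 1 else -1

/-- Masked input: missing coordinates (where `m j = true`) are replaced by `0`. -/
def mask {d : ℕ} (m : Fin d → Bool) (x : Fin d → ℝ) : Fin d → ℝ :=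
  fun j => if m j then 0 else x j

/-- Density of the multivariate Gaussian `N(μ, S)` on `ι → ℝ`. -/
noncomputable def gaussianPdf {ι : Type*} [Fintype ι] [DecidableEq ι]
    (μ : ι → ℝ) (S : Matrix ι ι ℝ) (x : ι → ℝ) : ℝ :=
  (Real.sqrt ((2 * Real.pi) ^ (Fintype.card ι) * S.det))⁻¹ *
    Real.exp (-(1 / 2) * ((x - μ) ⬝ᵥ (S⁻¹ *ᵥ (x - μ))))

/-- The multivariate Gaussian measure `N(μ, S)` on `ι → ℝ`. -/
noncomputable def gaussianMeasure {ι : Type*} [Fintype ι] [DecidableEq ι]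
    (μ : ι → ℝ) (S : Matrix ι ι ℝ) : Measure (ι → ℝ) :=
  volume.withDensity fun x => ENNReal.ofReal (gaussianPdf μ S x)

/-- Joint law of `((X, Y), M)` in the balanced MCAR LDA model:
`P(Y = ±1) = 1/2`, `X | Y = k ~ N(μₖ, Σ)` and `M ~ ν` independent of `(X, Y)`. -/
noncomputable def ldaModel {d : ℕ} (C : Matrix (Fin d) (Fin d) ℝ)
    (μpos μneg : Fin d → ℝ) (ν : Measure (Fin d → Bool)) :
    Measure (((Fin d → ℝ) × ℝ) × (Fin d → Bool)) :=
  (((1 / 2 : ENNReal) • ((gaussianMeasure μpos C).prod (Measure.dirac (1 : ℝ))) +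
      (1 / 2 : ENNReal) • ((gaussianMeasure μneg C).prod (Measure.dirac (-1 : ℝ)))).prod ν)

/-- Constant-imputation linear classifier: missing coordinates are imputed by `αⱼ`
and a single linear classifier is applied. -/
noncomputable def impClassifier {d : ℕ} (α γ : Fin d → ℝ) (γ₀ : ℝ) :
    (Fin d → ℝ) × (Fin d → Bool) → ℝ :=
  fun z => sgn (γ₀ + ∑ j, γ j * (if z.2 j then α j else z.1 j))

/-- Misclassification risk `P(Y ≠ h(X_{obs(M)}, M))` in the balanced MCAR LDA model. -/
noncomputable def ldaRisk {d : ℕ} (C : Matrix (Fin d) (Fin d) ℝ)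
    (μpos μneg : Fin d → ℝ) (ν : Measure (Fin d → Bool))
    (h : (Fin d → ℝ) × (Fin d → Bool) → ℝ) : ENNReal :=
  ldaModel C μpos μneg ν {w | w.1.2 ≠ h (mask w.2 w.1.1, w.2)}

/-! ### Splitting the risk by missing pattern -/

open Classical in
lemma measurable_mask {d : ℕ} : Measurable (fun p : (Fin d → Bool) × (Fin d → ℝ) => mask p.1 p.2) := by
  unfold mask
  refine measurable_pi_iff.2 fun j => ?_
  refine Measurable.ite ?_ measurable_const (by fun_prop)
  exact measurableSet_eq_fun (by fun_prop) measurable_const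

/-- Sum of the two class-conditional error probabilities of `h` on the missing pattern `m`, that
is, twice the risk of `h` given `M = m`. -/
noncomputable def patRisk {d : ℕ} (C : Matrix (Fin d) (Fin d) ℝ)
    (μpos μneg : Fin d → ℝ) (m : Fin d → Bool)
    (h : (Fin d → ℝ) × (Fin d → Bool) → ℝ) : ENNReal :=
  gaussianMeasure μpos C {x | 1 ≠ h (mask m x, m)} +
    gaussianMeasure μneg C {x | -1 ≠ h (mask m x, m)}

/-- Independence of `M` and `(X, Y)` makes the risk a `ν`-weighted sum over patterns. -/
lemma ldaRisk_eq {d : ℕ} (C : Matrix (Fin d) (Fin d) ℝ)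
    (μpos μneg : Fin d → ℝ) (ν : Measure (Fin d → Bool)) [IsProbabilityMeasure ν]
    {h : (Fin d → ℝ) × (Fin d → Bool) → ℝ} (hh : Measurable h) :
    ldaRisk C μpos μneg ν h = ∑ m, (1 / 2 * patRisk C μpos μneg m h) * ν {m} := by
  have hm := measurable_mask (d := d)
  have hS : MeasurableSet {w : ((Fin d → ℝ) × ℝ) × (Fin d → Bool) |
      w.1.2 ≠ h (mask w.2 w.1.1, w.2)} := by
    refine (measurableSet_eq_fun (by fun_prop) (hh.comp ?_)).compl
    exact (hm.comp (by fun_prop : Measurable fun w : ((Fin d → ℝ) × ℝ) × (Fin d → Bool) =>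
      (w.2, w.1.1))).prodMk (by fun_prop)
  have h1 : ∀ μ, SFinite (gaussianMeasure μ C) := fun μ => by
    unfold gaussianMeasure; infer_instance
  unfold ldaRisk ldaModel
  rw [Measure.prod_apply_symm hS, lintegral_fintype]
  refine Finset.sum_congr rfl fun m _ => ?_
  congr 1
  have hS' : MeasurableSet ((fun x : (Fin d → ℝ) × ℝ => (x, m)) ⁻¹'
    {w : ((Fin d → ℝ) × ℝ) × (Fin d → Bool) | w.1.2 ≠ h (mask w.2 w.1.1, w.2)}) :=
    hS.preimage (by fun_prop)
  rw [Measure.add_apply, Measure.smul_apply, Measure.smul_apply,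
    Measure.prod_apply_symm hS', Measure.prod_apply_symm hS', lintegral_dirac, lintegral_dirac]
  simp only [smul_eq_mul, ← mul_add]
  rfl

/-! ### The Gaussian measure -/

lemma measurable_gaussianPdf {d : ℕ} (C : Matrix (Fin d) (Fin d) ℝ) (μ : Fin d → ℝ) :
    Measurable (fun x => ENNReal.ofReal (gaussianPdf μ C x)) := by
  have : Continuous fun x => gaussianPdf μ C x := by
    unfold gaussianPdf
    fun_prop
  exact ENNReal.measurable_ofReal.comp this.measurable

lemma gaussianPdf_sub {d : ℕ} (C : Matrix (Fin d) (Fin d) ℝ) (μ t x : Fin d → ℝ) :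
    gaussianPdf μ C (x - t) = gaussianPdf (μ + t) C x := by
  unfold gaussianPdf
  rw [show x - t - μ = x - (μ + t) by abel]

open scoped MatrixOrder in
/-- Writing `C⁻¹ = Bᵀ B`, the density is a constant times a product of one-dimensional Gaussians
evaluated at `B (x - μ)`, and `B` is an invertible linear change of variables. -/
lemma isFiniteMeasure_gaussian {d : ℕ} {C : Matrix (Fin d) (Fin d) ℝ} (hC : C.PosDef)
    (μ : Fin d → ℝ) : IsFiniteMeasure (gaussianMeasure μ C) := by
  have hCi := hC.inv
  obtain ⟨B, hB⟩ := CStarAlgebra.nonneg_iff_eq_star_mul_self.mp hCi.posSemidef.nonneg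
  have hdet : B.det ≠ 0 := by
    intro h0
    have := hCi.det_pos
    rw [hB, det_mul, h0, mul_zero] at this
    exact lt_irrefl _ this
  have hq : ∀ x : Fin d → ℝ, x ⬝ᵥ (C⁻¹ *ᵥ x) = ∑ j, (B *ᵥ x) j ^ 2 := by
    intro x
    rw [hB, ← mulVec_mulVec, star_eq_conjTranspose, conjTranspose_eq_transpose_of_trivial,
      mulVec_transpose, dotProduct_comm, ← dotProduct_mulVec]
    simp [dotProduct, sq]
  have hint : Integrable (fun x : Fin d → ℝ => ∏ j, Real.exp (-(1 / 2) * x j ^ 2)) :=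
    Integrable.fintype_prod (f := fun _ t => Real.exp (-(1 / 2) * t ^ 2))
      fun _ => integrable_exp_neg_mul_sq (by norm_num)
  have hint2 : Integrable (fun x : Fin d → ℝ =>
      ∏ j, Real.exp (-(1 / 2) * (toLin' B x) j ^ 2)) := by
    have h2 := Real.map_matrix_volume_pi_eq_smul_volume_pi hdet
    have h3 : Integrable (fun x : Fin d → ℝ => ∏ j, Real.exp (-(1 / 2) * x j ^ 2))
        (Measure.map (toLin' B) volume) := by
      rw [h2]; exact hint.smul_measure ENNReal.ofReal_ne_top
    refine h3.comp_measurable ?_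
    exact (LinearMap.continuous_of_finiteDimensional (toLin' B)).measurable
  have hint3 : Integrable (fun x : Fin d → ℝ => gaussianPdf μ C x) := by
    have : (fun x : Fin d → ℝ => gaussianPdf μ C x) = fun x =>
        (Real.sqrt ((2 * Real.pi) ^ (Fintype.card (Fin d)) * C.det))⁻¹ *
          (fun x : Fin d → ℝ => ∏ j, Real.exp (-(1 / 2) * (toLin' B x) j ^ 2)) (x - μ) := by
      funext x
      simp only [gaussianPdf]
      rw [hq, ← Real.exp_sum, Finset.mul_sum]
      simp
    rw [this]
    exact (hint2.comp_sub_right μ).const_mul _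
  exact ⟨by
    rw [gaussianMeasure, withDensity_apply _ MeasurableSet.univ, Measure.restrict_univ]
    exact hint3.lintegral_lt_top⟩

/-- An event invariant under translation by `t` does not see a shift of the mean by `t`. -/
lemma gaussianMeasure_invariant {d : ℕ} (C : Matrix (Fin d) (Fin d) ℝ) (μ t : Fin d → ℝ)
    {s : Set (Fin d → ℝ)} (hs : MeasurableSet s) (hst : ∀ x, x - t ∈ s ↔ x ∈ s) :
    gaussianMeasure μ C s = gaussianMeasure (μ + t) C s := by
  unfold gaussianMeasure
  rw [withDensity_apply _ hs, withDensity_apply _ hs, ← lintegral_indicator hs,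
    ← lintegral_indicator hs, ← lintegral_sub_right_eq_self _ t]
  refine lintegral_congr fun x => ?_
  by_cases hx : x ∈ s
  · rw [Set.indicator_of_mem hx, Set.indicator_of_mem ((hst x).2 hx), gaussianPdf_sub]
  · rw [Set.indicator_of_notMem hx, Set.indicator_of_notMem (mt (hst x).1 hx)]

/-! ### Pointwise loss and the Bayes rule on one pattern -/

/-- Density of the misclassified class at `x` when the label `y` is predicted, for the classes
`N(μneg + C e, C)` (label `1`) and `N(μneg, C)` (label `-1`). Any `y ≠ 1` is read as `-1`. -/
noncomputable def loss {d : ℕ} (C : Matrix (Fin d) (Fin d) ℝ)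
    (μneg e : Fin d → ℝ) (y : ℝ) (x : Fin d → ℝ) : ENNReal :=
  if y = 1 then ENNReal.ofReal (gaussianPdf μneg C x)
  else ENNReal.ofReal (gaussianPdf (μneg + C *ᵥ e) C x)

lemma mask_sub {d : ℕ} {m : Fin d → Bool} {x t : Fin d → ℝ} (ht : ∀ j, m j = false → t j = 0) :
    mask m (x - t) = mask m x := by
  funext j
  unfold mask
  cases hm : m j
  · simp [ht j hm]
  · simp

lemma measurable_loss {d : ℕ} (C : Matrix (Fin d) (Fin d) ℝ)
    (μneg e : Fin d → ℝ) {f : (Fin d → ℝ) → ℝ} (hf : Measurable f) :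
    Measurable fun x => loss C μneg e (f x) x := by
  unfold loss
  refine Measurable.ite ?_ (measurable_gaussianPdf _ _) (measurable_gaussianPdf _ _)
  exact measurableSet_eq_fun hf measurable_const

lemma measurable_mask_pat {d : ℕ} (m : Fin d → Bool)
    {h : (Fin d → ℝ) × (Fin d → Bool) → ℝ} (hh : Measurable h) :
    Measurable fun x => h (mask m x, m) :=
  hh.comp ((measurable_mask.comp (measurable_const.prodMk measurable_id)).prodMk measurable_const)

/-- A classifier sees only the observed coordinates, so the mean of the positive class may be
replaced by `μneg + C e` as soon as the two agree on the observed coordinates. -/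
lemma patRisk_eq {d : ℕ} (C : Matrix (Fin d) (Fin d) ℝ)
    (μpos μneg e : Fin d → ℝ) (m : Fin d → Bool)
    {h : (Fin d → ℝ) × (Fin d → Bool) → ℝ} (hh : Measurable h)
    (hv : ∀ z, h z = 1 ∨ h z = -1)
    (he : ∀ j, m j = false → (C *ᵥ e) j = μpos j - μneg j) :
    patRisk C μpos μneg m h = ∫⁻ x, loss C μneg e (h (mask m x, m)) x := by
  have hm := measurable_mask_pat m hh
  have hs1 : MeasurableSet {x | 1 ≠ h (mask m x, m)} :=
    (measurableSet_eq_fun measurable_const hm).compl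
  have hs2 : MeasurableSet {x | -1 ≠ h (mask m x, m)} :=
    (measurableSet_eq_fun measurable_const hm).compl
  have h1 : gaussianMeasure μpos C {x | 1 ≠ h (mask m x, m)} =
      gaussianMeasure (μneg + C *ᵥ e) C {x | 1 ≠ h (mask m x, m)} := by
    rw [gaussianMeasure_invariant C μpos (μneg + C *ᵥ e - μpos) hs1]
    · rw [add_sub_cancel]
    · intro x
      have : mask m (x - (μneg + C *ᵥ e - μpos)) = mask m x :=
        mask_sub fun j hj => by simp [he j hj]
      simp only [Set.mem_ofPred_eq, this]
  rw [patRisk, h1, gaussianMeasure, gaussianMeasure, withDensity_apply _ hs1,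
    withDensity_apply _ hs2, ← lintegral_indicator hs1, ← lintegral_indicator hs2,
    ← lintegral_add_left ((measurable_gaussianPdf _ _).indicator hs1)]
  refine lintegral_congr fun x => ?_
  rcases hv (mask m x, m) with h' | h' <;> simp [loss, Set.indicator, h'] <;> norm_num

lemma gaussianPdf_lt_iff {d : ℕ} {C : Matrix (Fin d) (Fin d) ℝ} (hC : C.PosDef)
    (μneg e x : Fin d → ℝ) :
    gaussianPdf μneg C x < gaussianPdf (μneg + C *ᵥ e) C x ↔
      0 < e ⬝ᵥ (x - μneg) - 1 / 2 * (e ⬝ᵥ (C *ᵥ e)) := by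
  have hdet : IsUnit C.det := hC.det_pos.ne'.isUnit
  have hpos : 0 < (Real.sqrt ((2 * Real.pi) ^ (Fintype.card (Fin d)) * C.det))⁻¹ := by
    have := hC.det_pos
    positivity
  have hsymm : C⁻¹ᵀ = C⁻¹ := by
    simpa [IsHermitian, conjTranspose_eq_transpose_of_trivial] using hC.inv.isHermitian
  have h1 : C⁻¹ *ᵥ (C *ᵥ e) = e := by
    rw [mulVec_mulVec, nonsing_inv_mul _ hdet, one_mulVec]
  have h2 : ∀ y : Fin d → ℝ, (C *ᵥ e) ⬝ᵥ (C⁻¹ *ᵥ y) = e ⬝ᵥ y := by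
    intro y
    rw [dotProduct_mulVec, ← mulVec_transpose, hsymm, h1]
  unfold gaussianPdf
  rw [mul_lt_mul_iff_right₀ hpos, Real.exp_lt_exp, ← sub_sub]
  generalize x - μneg = y
  rw [mulVec_sub, h1, sub_dotProduct, dotProduct_sub, dotProduct_sub, h2, dotProduct_comm y e,
    dotProduct_comm (C *ᵥ e) e]
  constructor <;> intro h <;> linarith

/-- Obtained from `gaussianPdf_lt_iff` by exchanging the two classes, which replaces `e` by `-e`. -/
lemma gaussianPdf_gt_iff {d : ℕ} {C : Matrix (Fin d) (Fin d) ℝ} (hC : C.PosDef)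
    (μneg e x : Fin d → ℝ) :
    gaussianPdf (μneg + C *ᵥ e) C x < gaussianPdf μneg C x ↔
      e ⬝ᵥ (x - μneg) - 1 / 2 * (e ⬝ᵥ (C *ᵥ e)) < 0 := by
  have := gaussianPdf_lt_iff hC (μneg + C *ᵥ e) (-e) x
  rw [mulVec_neg, add_neg_cancel_right] at this
  rw [this, ← sub_sub, dotProduct_sub]
  simp only [neg_dotProduct, dotProduct_neg]
  constructor <;> intro h <;> linarith

/-- The affine discriminant function with normal vector `e` vanishing at `a`. -/
noncomputable def score {d : ℕ} (e a x : Fin d → ℝ) : ℝ := ∑ j, e j * (x j - a j)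

lemma score_mask {d : ℕ} {e : Fin d → ℝ} {m : Fin d → Bool} (hm : ∀ j, m j = true → e j = 0)
    (a x : Fin d → ℝ) : score e a (mask m x) = score e a x := by
  refine Finset.sum_congr rfl fun j _ => ?_
  unfold mask
  cases h : m j
  · simp
  · simp [hm j h]

/-- When `e` is supported on the observed coordinates, the log-likelihood ratio of `N(μneg + C e, C)`
against `N(μneg, C)` depends on the observed coordinates only. -/
lemma score_eq {d : ℕ} (C : Matrix (Fin d) (Fin d) ℝ)
    (μpos μneg e : Fin d → ℝ) (m : Fin d → Bool) (hm : ∀ j, m j = true → e j = 0)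
    (he : ∀ j, m j = false → (C *ᵥ e) j = μpos j - μneg j) (x : Fin d → ℝ) :
    e ⬝ᵥ (x - μneg) - 1 / 2 * (e ⬝ᵥ (C *ᵥ e)) =
      score e (fun j => (μpos j + μneg j) / 2) x := by
  unfold score dotProduct
  rw [Finset.mul_sum, ← Finset.sum_sub_distrib]
  refine Finset.sum_congr rfl fun j _ => ?_
  cases h : m j
  · rw [he j h, Pi.sub_apply]; ring
  · rw [hm j h]; ring

lemma sgn_eq_or (t : ℝ) : sgn t = 1 ∨ sgn t = -1 := by
  unfold sgn; split_ifs <;> simp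

lemma loss_sgn_le {d : ℕ} {C : Matrix (Fin d) (Fin d) ℝ} (hC : C.PosDef)
    (μneg e x : Fin d → ℝ) (y : ℝ) :
    loss C μneg e (sgn (e ⬝ᵥ (x - μneg) - 1 / 2 * (e ⬝ᵥ (C *ᵥ e)))) x ≤ loss C μneg e y x := by
  have h1 := gaussianPdf_lt_iff hC μneg e x
  have h2 := gaussianPdf_gt_iff hC μneg e x
  unfold loss sgn
  by_cases h : 0 ≤ e ⬝ᵥ (x - μneg) - 1 / 2 * (e ⬝ᵥ (C *ᵥ e))
  · rw [if_pos h, if_pos rfl]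
    split_ifs
    · rfl
    · exact ENNReal.ofReal_le_ofReal (not_lt.1 (mt h2.1 (not_lt.2 h)))
  · rw [if_neg h, if_neg (by norm_num)]
    split_ifs
    · exact ENNReal.ofReal_le_ofReal (h2.2 (not_le.1 h)).le
    · rfl

/-- A classifier that is `sgn` of the discriminant on the pattern `m` minimizes the pointwise loss,
hence the risk on `m`. -/
lemma bayes_opt {d : ℕ} {C : Matrix (Fin d) (Fin d) ℝ} (hC : C.PosDef)
    (μpos μneg e : Fin d → ℝ) (m : Fin d → Bool) (hm : ∀ j, m j = true → e j = 0)
    (he : ∀ j, m j = false → (C *ᵥ e) j = μpos j - μneg j)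
    {h g : (Fin d → ℝ) × (Fin d → Bool) → ℝ} (hh : Measurable h)
    (hv : ∀ z, h z = 1 ∨ h z = -1) (hg : Measurable g) (hgv : ∀ z, g z = 1 ∨ g z = -1)
    (hb : ∀ x, h (mask m x, m) = sgn (score e (fun j => (μpos j + μneg j) / 2) x)) :
    patRisk C μpos μneg m h ≤ patRisk C μpos μneg m g := by
  rw [patRisk_eq C μpos μneg e m hh hv he, patRisk_eq C μpos μneg e m hg hgv he]
  refine lintegral_mono fun x => ?_
  dsimp only
  rw [hb, ← score_eq C μpos μneg e m hm he]
  exact loss_sgn_le hC ..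

/-- A minimizer of the risk on `m` attains the minimal pointwise loss almost everywhere, and this
determines its value wherever the two densities differ. -/
lemma bayes_unique {d : ℕ} {C : Matrix (Fin d) (Fin d) ℝ} (hC : C.PosDef)
    (μpos μneg e : Fin d → ℝ) (m : Fin d → Bool) (hm : ∀ j, m j = true → e j = 0)
    (he : ∀ j, m j = false → (C *ᵥ e) j = μpos j - μneg j)
    {h g : (Fin d → ℝ) × (Fin d → Bool) → ℝ} (hh : Measurable h)
    (hv : ∀ z, h z = 1 ∨ h z = -1) (hg : Measurable g) (hgv : ∀ z, g z = 1 ∨ g z = -1)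
    (hb : ∀ x, h (mask m x, m) = sgn (score e (fun j => (μpos j + μneg j) / 2) x))
    (hle : patRisk C μpos μneg m g ≤ patRisk C μpos μneg m h) :
    ∀ᵐ x : Fin d → ℝ, score e (fun j => (μpos j + μneg j) / 2) x ≠ 0 →
      g (mask m x, m) = sgn (score e (fun j => (μpos j + μneg j) / 2) x) := by
  have hfin : patRisk C μpos μneg m h ≠ ⊤ := by
    have := isFiniteMeasure_gaussian hC μpos
    have := isFiniteMeasure_gaussian hC μneg
    unfold patRisk
    finiteness
  rw [patRisk_eq C μpos μneg e m hh hv he] at hle hfin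
  rw [patRisk_eq C μpos μneg e m hg hgv he] at hle
  have key := ae_eq_of_ae_le_of_lintegral_le (μ := volume)
    (f := fun x => loss C μneg e (h (mask m x, m)) x)
    (g := fun x => loss C μneg e (g (mask m x, m)) x)
    (Filter.Eventually.of_forall fun x => by
      dsimp only
      rw [hb, ← score_eq C μpos μneg e m hm he]
      exact loss_sgn_le hC ..) hfin
    (measurable_loss C μneg e (measurable_mask_pat m hg)).aemeasurable hle
  filter_upwards [key] with x hx hne
  rw [hb] at hx
  have h1 := gaussianPdf_lt_iff hC μneg e x
  have h2 := gaussianPdf_gt_iff hC μneg e x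
  rw [score_eq C μpos μneg e m hm he] at h1 h2
  have hpos : ∀ ν : Fin d → ℝ, 0 < gaussianPdf ν C x := by
    intro ν
    have := hC.det_pos
    unfold gaussianPdf
    positivity
  rcases lt_or_gt_of_ne hne with hs | hs
  · have hlt := (ENNReal.ofReal_lt_ofReal_iff (hpos _)).2 (h2.2 hs)
    rcases hgv (mask m x, m) with hg1 | hg1
    · exfalso
      rw [hg1, sgn, if_neg (not_le.2 hs)] at hx
      norm_num [loss] at hx
      exact hlt.ne hx
    · rw [hg1, sgn, if_neg (not_le.2 hs)]
  · have hlt := (ENNReal.ofReal_lt_ofReal_iff (hpos _)).2 (h1.2 hs)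
    rcases hgv (mask m x, m) with hg1 | hg1
    · rw [hg1, sgn, if_pos hs.le]
    · exfalso
      rw [hg1, sgn, if_pos hs.le] at hx
      norm_num [loss] at hx
      exact hlt.ne hx

/-! ### Directional constraints on an optimal linear classifier -/

/-- If moving along `v` leaves the positive side of `score e a`, then `L` cannot be nondecreasing
along `v` and have almost everywhere the sign of `score e a`. -/
lemma halfspace_dir {d : ℕ} (e a v : Fin d → ℝ) (L : (Fin d → ℝ) → ℝ)
    (hL : ∀ x, L x ≤ L (x + v)) (hev : ∑ j, e j * v j < 0)
    (hae : ∀ᵐ x : Fin d → ℝ, score e a x ≠ 0 → sgn (L x) = sgn (score e a x)) : False := by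
  have hae' := (measurePreserving_add_right (volume : Measure (Fin d → ℝ)) v).quasiMeasurePreserving.ae
    hae
  have hs : ∀ x, score e a (x + v) = score e a x + ∑ j, e j * v j := by
    intro x
    unfold score
    rw [← Finset.sum_add_distrib]
    exact Finset.sum_congr rfl fun j _ => by rw [Pi.add_apply]; ring
  have hcont : Continuous (score e a) := by unfold score; fun_prop
  have hopen : IsOpen {x : Fin d → ℝ | 0 < score e a x ∧ score e a (x + v) < 0} :=
    (isOpen_lt continuous_const hcont).inter
      (isOpen_lt (hcont.comp (by fun_prop)) continuous_const)
  have h0 : score e a (a - (1 / 2 : ℝ) • v) = -(1 / 2) * ∑ j, e j * v j := by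
    unfold score
    rw [Finset.mul_sum]
    exact Finset.sum_congr rfl fun j _ => by
      rw [Pi.sub_apply, Pi.smul_apply, smul_eq_mul]; ring
  -- The segment from `a - v / 2` to `a + v / 2` crosses the hyperplane `score e a = 0`.
  obtain ⟨x, ⟨hx3, hx4⟩, hx1, hx2⟩ := (Measure.dense_of_ae (hae.and hae')).exists_mem_open hopen
    ⟨a - (1 / 2 : ℝ) • v, by rw [h0]; linarith, by rw [hs, h0]; linarith⟩
  have h1 := hx3 hx1.ne'
  have h2 := hx4 hx2.ne
  have h3 := hL x
  unfold sgn at h1 h2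
  rw [if_pos hx1.le] at h1
  rw [if_neg (not_le.2 hx2)] at h2
  split_ifs at h1 h2 <;> linarith

lemma measurable_sgn : Measurable sgn := by
  unfold sgn
  exact Measurable.ite measurableSet_Ici measurable_const measurable_const

lemma measurable_impClassifier {d : ℕ} (α γ : Fin d → ℝ) (γ₀ : ℝ) :
    Measurable (impClassifier α γ γ₀) := by
  unfold impClassifier
  refine measurable_sgn.comp (measurable_const.add (Finset.measurable_sum _ fun j _ =>
    measurable_const.mul (Measurable.ite ?_ measurable_const (by fun_prop))))
  exact measurableSet_eq_fun (by fun_prop) measurable_const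

/-- Every pattern has positive mass, so a classifier of minimal risk minimizes the risk on each
pattern: otherwise modify it on the pattern `m` alone. -/
lemma patRisk_le_of_opt {d : ℕ} {C : Matrix (Fin d) (Fin d) ℝ} (hC : C.PosDef)
    (μpos μneg : Fin d → ℝ) (ν : Measure (Fin d → Bool)) [IsProbabilityMeasure ν]
    (hν : ∀ m : Fin d → Bool, ν {m} ≠ 0)
    {h : (Fin d → ℝ) × (Fin d → Bool) → ℝ} (hh : Measurable h) (hv : ∀ z, h z = 1 ∨ h z = -1)
    (hopt : ∀ g : (Fin d → ℝ) × (Fin d → Bool) → ℝ, Measurable g →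
      (∀ z, g z = 1 ∨ g z = -1) → ldaRisk C μpos μneg ν h ≤ ldaRisk C μpos μneg ν g)
    (m : Fin d → Bool) {b : (Fin d → ℝ) × (Fin d → Bool) → ℝ} (hb : Measurable b)
    (hbv : ∀ z, b z = 1 ∨ b z = -1) :
    patRisk C μpos μneg m h ≤ patRisk C μpos μneg m b := by
  classical
  set g : (Fin d → ℝ) × (Fin d → Bool) → ℝ := fun z => if z.2 = m then b z else h z with hgdef
  have hg : Measurable g :=
    Measurable.ite (measurable_snd (measurableSet_singleton m)) hb hh
  have hgv : ∀ z, g z = 1 ∨ g z = -1 := by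
    intro z
    simp only [hgdef]
    split_ifs
    · exact hbv z
    · exact hv z
  have key := hopt g hg hgv
  rw [ldaRisk_eq C μpos μneg ν hh, ldaRisk_eq C μpos μneg ν hg,
    ← Finset.add_sum_erase _ _ (Finset.mem_univ m),
    ← Finset.add_sum_erase _ _ (Finset.mem_univ m)] at key
  have hrest : ∑ m' ∈ Finset.univ.erase m, 1 / 2 * patRisk C μpos μneg m' g * ν {m'} =
      ∑ m' ∈ Finset.univ.erase m, 1 / 2 * patRisk C μpos μneg m' h * ν {m'} := by
    refine Finset.sum_congr rfl fun m' hm' => ?_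
    have : m' ≠ m := Finset.ne_of_mem_erase hm'
    simp [patRisk, hgdef, this]
  have hgb : patRisk C μpos μneg m g = patRisk C μpos μneg m b := by
    simp [patRisk, hgdef]
  have hfin : ∑ m' ∈ Finset.univ.erase m, 1 / 2 * patRisk C μpos μneg m' h * ν {m'} ≠ ⊤ := by
    have := isFiniteMeasure_gaussian hC μpos
    have := isFiniteMeasure_gaussian hC μneg
    refine ENNReal.sum_ne_top.2 fun m' _ => ?_
    unfold patRisk
    finiteness
  rw [hrest, hgb, ENNReal.add_le_add_iff_right hfin,
    ENNReal.mul_le_mul_iff_left (hν m) (measure_ne_top _ _),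
    ENNReal.mul_le_mul_iff_right (by norm_num) (by norm_num)] at key
  exact key

/-- If the imputation classifier is optimal, then on every pattern `m` where `j` is observed, its
coefficient `γ j` has the sign of the coefficient `e j` of the Bayes classifier, if `e j ≠ 0`. -/
lemma opt_direction {d : ℕ} {C : Matrix (Fin d) (Fin d) ℝ} (hC : C.PosDef)
    (μpos μneg : Fin d → ℝ) (ν : Measure (Fin d → Bool)) [IsProbabilityMeasure ν]
    (hν : ∀ m : Fin d → Bool, ν {m} ≠ 0) (α γ : Fin d → ℝ) (γ₀ : ℝ)
    (hopt : ∀ g : (Fin d → ℝ) × (Fin d → Bool) → ℝ, Measurable g →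
      (∀ z, g z = 1 ∨ g z = -1) →
      ldaRisk C μpos μneg ν (impClassifier α γ γ₀) ≤ ldaRisk C μpos μneg ν g)
    (m : Fin d → Bool) (e : Fin d → ℝ) (hm : ∀ j, m j = true → e j = 0)
    (he : ∀ j, m j = false → (C *ᵥ e) j = μpos j - μneg j)
    (j : Fin d) (hj : m j = false) (s : ℝ) (hs : e j * s < 0) : γ j * s < 0 := by
  by_contra! hcon
  have hb : Measurable fun z : (Fin d → ℝ) × (Fin d → Bool) =>
      sgn (score e (fun j => (μpos j + μneg j) / 2) z.1) := by
    refine measurable_sgn.comp ?_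
    unfold score
    fun_prop
  have hle := patRisk_le_of_opt hC μpos μneg ν hν (measurable_impClassifier α γ γ₀)
    (fun _ => sgn_eq_or _) hopt m hb (fun _ => sgn_eq_or _)
  have hae := bayes_unique hC μpos μneg e m hm he hb (fun _ => sgn_eq_or _)
    (measurable_impClassifier α γ γ₀) (fun _ => sgn_eq_or _)
    (fun x => by dsimp only; rw [score_mask hm]) hle
  refine halfspace_dir e _ (Pi.single j s)
    (fun x => γ₀ + ∑ i, γ i * (if m i then α i else mask m x i)) (fun x => ?_) ?_ hae
  · have : ∑ i, γ i * (if m i then α i else mask m (x + Pi.single j s) i) =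
        ∑ i, γ i * (if m i then α i else mask m x i) + γ j * s := by
      rw [← sub_eq_iff_eq_add', ← Finset.sum_sub_distrib, Finset.sum_eq_single j]
      · simp [mask, hj]; ring
      · intro i _ hi
        simp [mask, Pi.single_eq_of_ne hi]
      · simp
    rw [this]
    linarith
  · rw [Finset.sum_eq_single j]
    · simpa using hs
    · intro i _ hi
      simp [Pi.single_eq_of_ne hi]
    · simp

/-! ### The two implications -/

/-- If `C i j ≠ 0`, some mean difference makes the Bayes coefficient of `x j` negative when all
coordinates are observed and positive when `j` alone is observed. -/
lemma diag_of_opt {d : ℕ} {C : Matrix (Fin d) (Fin d) ℝ} (hC : C.PosDef)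
    (ν : Measure (Fin d → Bool)) [IsProbabilityMeasure ν]
    (hν : ∀ m : Fin d → Bool, ν {m} ≠ 0)
    (H : ∀ μpos μneg : Fin d → ℝ, ∃ (α γ : Fin d → ℝ) (γ₀ : ℝ),
        ∀ g : (Fin d → ℝ) × (Fin d → Bool) → ℝ, Measurable g →
          (∀ z, g z = 1 ∨ g z = -1) →
          ldaRisk C μpos μneg ν (impClassifier α γ γ₀) ≤ ldaRisk C μpos μneg ν g)
    (i j : Fin d) (hij : i ≠ j) : C i j = 0 := by
  by_contra hne
  have hjj : 0 < C j j := hC.diag_pos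
  have hsym : C j i = C i j := by simpa using hC.isHermitian.apply i j
  -- With `e = C i j • u i - t • u j`, `(C e) j = C i j ^ 2 - t * C j j`; this `t` makes it positive
  -- while `e j = -t` is negative.
  set t : ℝ := C i j ^ 2 / (2 * C j j) with ht
  have htpos : 0 < t := by positivity
  set e : Fin d → ℝ := Pi.single i (C i j) - Pi.single j t with hedef
  have hej : e j = -t := by simp [hedef, Pi.single_eq_of_ne hij.symm]
  have hδ : (C *ᵥ e) j = C i j ^ 2 / 2 := by
    simp only [hedef, mulVec_sub, mulVec_single, Pi.sub_apply, Pi.smul_apply, col_apply,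
      MulOpposite.smul_eq_mul_unop, MulOpposite.unop_op, hsym]
    rw [ht]
    field_simp
    ring
  obtain ⟨α, γ, γ₀, hopt⟩ := H (C *ᵥ e) 0
  have h1 : γ j * 1 < 0 := opt_direction hC _ _ ν hν α γ γ₀ hopt (fun _ => false) e (by simp)
    (by simp) j rfl 1 (by rw [hej]; linarith)
  have h2 : γ j * (-1) < 0 := by
    refine opt_direction hC _ _ ν hν α γ γ₀ hopt (fun l => !decide (l = j))
      (Pi.single j ((C *ᵥ e) j / C j j)) ?_ ?_ j (by simp) (-1) ?_
    · intro l hl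
      simp at hl
      exact Pi.single_eq_of_ne hl _
    · intro l hl
      simp at hl
      subst hl
      simp only [mulVec_single, Pi.smul_apply, col_apply,
        MulOpposite.smul_eq_mul_unop, MulOpposite.unop_op, Pi.zero_apply, sub_zero]
      field_simp
    · have : 0 < (C *ᵥ e) j / C j j := by rw [hδ]; positivity
      simpa using this
  linarith

lemma opt_of_diag {d : ℕ} {C : Matrix (Fin d) (Fin d) ℝ} (hC : C.PosDef)
    (ν : Measure (Fin d → Bool)) [IsProbabilityMeasure ν]
    (hdiag : ∀ i j : Fin d, i ≠ j → C i j = 0) (μpos μneg : Fin d → ℝ) :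
    ∃ (γ : Fin d → ℝ) (γ₀ : ℝ),
        ∀ g : (Fin d → ℝ) × (Fin d → Bool) → ℝ, Measurable g →
          (∀ z, g z = 1 ∨ g z = -1) →
          ldaRisk C μpos μneg ν
              (impClassifier (fun j => (μpos j + μneg j) / 2) γ γ₀) ≤
            ldaRisk C μpos μneg ν g := by
  refine ⟨fun j => (μpos j - μneg j) / C j j,
    -∑ j, (μpos j - μneg j) / C j j * ((μpos j + μneg j) / 2), fun g hg hgv => ?_⟩
  rw [ldaRisk_eq C μpos μneg ν (measurable_impClassifier _ _ _), ldaRisk_eq C μpos μneg ν hg]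
  gcongr with m _
  refine bayes_opt hC μpos μneg (fun j => if m j then 0 else (μpos j - μneg j) / C j j) m
    (fun j hj => by simp [hj]) (fun j hj => ?_) (measurable_impClassifier _ _ _)
    (fun _ => sgn_eq_or _) hg hgv (fun x => ?_)
  · have hjj : 0 < C j j := hC.diag_pos
    rw [mulVec, dotProduct, Finset.sum_eq_single j]
    · simp only [hj, Bool.false_eq_true, if_false]
      field_simp
    · intro l _ hl
      rw [hdiag j l hl.symm, zero_mul]
    · simp
  · unfold impClassifier score
    congr 1
    rw [neg_add_eq_sub, ← Finset.sum_sub_distrib]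
    refine Finset.sum_congr rfl fun j _ => ?_
    cases hj : m j <;> simp [mask, hj]
    ring

/-- in the balanced MCAR LDA model with `d ≥ 3` and all patterns
admissible, a constant-imputation linear classifier can be Bayes optimal for all values
of `μ₁` and `μ₋₁` iff `Σ` is diagonal; in that case the optimal imputation constants
are `αⱼ = (μ_{1,j} + μ_{−1,j})/2`. (`μpos` stands for `μ₁`, `μneg` for `μ₋₁`.) -/
theorem stmt10 (d : ℕ) (hd : 3 ≤ d)
    (C : Matrix (Fin d) (Fin d) ℝ) (hC : C.PosDef)
    (ν : Measure (Fin d → Bool)) [IsProbabilityMeasure ν]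
    (hν : ∀ m : Fin d → Bool, ν {m} ≠ 0) :
    ((∀ μpos μneg : Fin d → ℝ, ∃ (α γ : Fin d → ℝ) (γ₀ : ℝ),
        ∀ g : (Fin d → ℝ) × (Fin d → Bool) → ℝ, Measurable g →
          (∀ z, g z = 1 ∨ g z = -1) →
          ldaRisk C μpos μneg ν (impClassifier α γ γ₀) ≤ ldaRisk C μpos μneg ν g)
      ↔ (∀ i j : Fin d, i ≠ j → C i j = 0)) ∧
    ((∀ i j : Fin d, i ≠ j → C i j = 0) →
      ∀ μpos μneg : Fin d → ℝ, ∃ (γ : Fin d → ℝ) (γ₀ : ℝ),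
        ∀ g : (Fin d → ℝ) × (Fin d → Bool) → ℝ, Measurable g →
          (∀ z, g z = 1 ∨ g z = -1) →
          ldaRisk C μpos μneg ν
              (impClassifier (fun j => (μpos j + μneg j) / 2) γ γ₀) ≤
            ldaRisk C μpos μneg ν g) := by
  exact ⟨⟨fun H => diag_of_opt hC ν hν H, fun hdiag μpos μneg =>
      ⟨_, opt_of_diag hC ν hdiag μpos μneg⟩⟩,
    fun hdiag => opt_of_diag hC ν hdiag⟩
end

section
/- Let n ≥ 0, p ∈ (0,1], and B ~ Binomial(n, p). Then E[1/(1+B)²] ≤ 2/((n+1)(n+2)p²) and E[1_{B>0}/B²] ≤ 8/((n+1)(n+2)p²). -/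
/-!
The weight `1/((i+1)(i+2))` is absorbed by the binomial coefficient:
`C(n,i)/((i+1)(i+2)) = C(n+2,i+2)/((n+1)(n+2))`. Hence `(n+1)(n+2)p² · E[1/((B+1)(B+2))]` is the
sum of the terms `p^j` with `j ≥ 2` in the expansion of `(p + (1-p))^(n+2) = 1`, so it is at most `1`
(`sum_choose_mul_inv_le`). The first bound follows from `1/(1+B)² ≤ 2/((B+1)(B+2))`, and the second
from the first, since `1/B² ≤ 4/(1+B)²` for `B ≥ 1`.
-/

open MeasureTheory

/-- Functions of `B` bounded by `1` are integrable, with expectation a finite binomial sum. The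
weights vanish beyond `n`, so no separate argument that `B ≤ n` almost surely is needed. -/
lemma integral_eq_sum_binomial {Ω : Type*} [MeasurableSpace Ω] (P : Measure Ω)
    [IsProbabilityMeasure P] (n : ℕ) (p : ℝ) (B : Ω → ℕ) (hB : Measurable B)
    (hbinom : ∀ i : ℕ,
      (P {ω | B ω = i}).toReal = (n.choose i : ℝ) * p ^ i * (1 - p) ^ (n - i))
    (f : ℕ → ℝ) (hf : ∀ i, |f i| ≤ 1) :
    Integrable (fun ω => f (B ω)) P ∧ ∫ ω, f (B ω) ∂P =
      ∑ i ∈ Finset.range (n + 1), (n.choose i : ℝ) * p ^ i * (1 - p) ^ (n - i) * f i := by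
  have hfm : Measurable f := measurable_of_countable f
  have : IsProbabilityMeasure (P.map B) := Measure.isProbabilityMeasure_map hB.aemeasurable
  have hint : Integrable f (P.map B) :=
    Integrable.of_bound hfm.aestronglyMeasurable 1 (Filter.Eventually.of_forall hf)
  refine ⟨hint.comp_measurable hB, ?_⟩
  rw [← integral_map hB.aemeasurable hfm.aestronglyMeasurable, integral_countable hint]
  have hw : ∀ i, (P.map B).real {i} = (n.choose i : ℝ) * p ^ i * (1 - p) ^ (n - i) := by
    intro i
    rw [← hbinom i, measureReal_def, Measure.map_apply hB (measurableSet_singleton i)]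
    rfl
  simp only [hw, smul_eq_mul]
  refine tsum_eq_sum fun i hi => ?_
  rw [Finset.mem_range, not_lt] at hi
  simp [Nat.choose_eq_zero_of_lt hi]

lemma choose_mul_inv_eq (n i : ℕ) :
    (n.choose i : ℝ) * (((i : ℝ) + 1) * ((i : ℝ) + 2))⁻¹ =
      ((n + 2).choose (i + 2) : ℝ) / (((n : ℝ) + 1) * ((n : ℝ) + 2)) := by
  have h1 : ((n : ℝ) + 1) * n.choose i = (n + 1).choose (i + 1) * ((i : ℝ) + 1) := by
    exact_mod_cast Nat.add_one_mul_choose_eq n i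
  have h2 : ((n : ℝ) + 2) * (n + 1).choose (i + 1) =
      (n + 2).choose (i + 2) * ((i : ℝ) + 2) := by
    exact_mod_cast Nat.add_one_mul_choose_eq (n + 1) (i + 1)
  rw [← div_eq_mul_inv, div_eq_div_iff (by positivity) (by positivity)]
  linear_combination ((n : ℝ) + 2) * h1 + ((i : ℝ) + 1) * h2

/-- `E[1/((B+1)(B+2))] ≤ 1/((n+1)(n+2)p²)`, written as a finite sum. -/
lemma sum_choose_mul_inv_le (n : ℕ) (p : ℝ) (hp0 : 0 < p) (hp1 : p ≤ 1) :
    ∑ i ∈ Finset.range (n + 1), (n.choose i : ℝ) * p ^ i * (1 - p) ^ (n - i) *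
      (((i : ℝ) + 1) * ((i : ℝ) + 2))⁻¹ ≤ 1 / (((n : ℝ) + 1) * ((n : ℝ) + 2) * p ^ 2) := by
  have hq : 0 ≤ 1 - p := sub_nonneg.2 hp1
  have hsum : ∑ i ∈ Finset.range (n + 1),
      p ^ (i + 2) * (1 - p) ^ (n - i) * ((n + 2).choose (i + 2) : ℝ) ≤ 1 := by
    have h := add_pow p (1 - p) (n + 2)
    rw [add_sub_cancel, one_pow, Finset.sum_range_succ', Finset.sum_range_succ'] at h
    simp only [add_assoc, Nat.reduceAdd, Nat.add_sub_add_right] at h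
    have h0 : 0 ≤ p ^ 1 * (1 - p) ^ (n + 2 - 1) * ((n + 2).choose 1 : ℝ) := by
      positivity
    have h1 : 0 ≤ p ^ 0 * (1 - p) ^ (n + 2 - 0) * ((n + 2).choose 0 : ℝ) := by positivity
    linarith
  rw [le_div_iff₀ (by positivity), Finset.sum_mul]
  refine le_trans (le_of_eq (Finset.sum_congr rfl fun i _ => ?_)) hsum
  have h := choose_mul_inv_eq n i
  rw [eq_div_iff (by positivity)] at h
  linear_combination p ^ (i + 2) * (1 - p) ^ (n - i) * h

/-- inverse second-moment bounds for a binomial random variable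
`B ~ Binomial(n, p)`: `E[1/(1+B)²] ≤ 2/((n+1)(n+2)p²)` and
`E[1_{B>0}/B²] ≤ 8/((n+1)(n+2)p²)`. -/
theorem stmt19 {Ω : Type*} [MeasurableSpace Ω] (P : Measure Ω) [IsProbabilityMeasure P]
    (n : ℕ) (p : ℝ) (hp0 : 0 < p) (hp1 : p ≤ 1)
    (B : Ω → ℕ) (hB : Measurable B)
    (hbinom : ∀ i : ℕ,
      (P {ω | B ω = i}).toReal = (n.choose i : ℝ) * p ^ i * (1 - p) ^ (n - i)) :
    (∫ ω, ((1 : ℝ) + (B ω : ℝ))⁻¹ ^ 2 ∂P) ≤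
        2 / (((n : ℝ) + 1) * ((n : ℝ) + 2) * p ^ 2) ∧
    (∫ ω, (if 0 < B ω then ((B ω : ℝ) ^ 2)⁻¹ else 0) ∂P) ≤
        8 / (((n : ℝ) + 1) * ((n : ℝ) + 2) * p ^ 2) := by
  have hq : 0 ≤ 1 - p := sub_nonneg.2 hp1
  have hb1 : ∀ i : ℕ, |((1 : ℝ) + (i : ℝ))⁻¹ ^ 2| ≤ 1 := by
    intro i
    rw [abs_of_nonneg (by positivity)]
    exact pow_le_one₀ (by positivity) (inv_le_one_of_one_le₀ (by simp))
  have hb2 : ∀ i : ℕ, |(if 0 < i then ((i : ℝ) ^ 2)⁻¹ else 0)| ≤ 1 := by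
    intro i
    split_ifs with hi
    · rw [abs_of_nonneg (by positivity)]
      exact inv_le_one_of_one_le₀ (one_le_pow₀ (by exact_mod_cast hi))
    · simp
  obtain ⟨hi1, he1⟩ := integral_eq_sum_binomial P n p B hB hbinom _ hb1
  obtain ⟨hi2, -⟩ := integral_eq_sum_binomial P n p B hB hbinom _ hb2
  have hfirst : (∫ ω, ((1 : ℝ) + (B ω : ℝ))⁻¹ ^ 2 ∂P) ≤
      2 / (((n : ℝ) + 1) * ((n : ℝ) + 2) * p ^ 2) := by
    calc (∫ ω, ((1 : ℝ) + (B ω : ℝ))⁻¹ ^ 2 ∂P)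
        = ∑ i ∈ Finset.range (n + 1), (n.choose i : ℝ) * p ^ i * (1 - p) ^ (n - i) *
            ((1 : ℝ) + (i : ℝ))⁻¹ ^ 2 := he1
      _ ≤ ∑ i ∈ Finset.range (n + 1), 2 * ((n.choose i : ℝ) * p ^ i * (1 - p) ^ (n - i) *
            (((i : ℝ) + 1) * ((i : ℝ) + 2))⁻¹) := by
          refine Finset.sum_le_sum fun i _ => ?_
          have h : ((1 : ℝ) + (i : ℝ))⁻¹ ^ 2 ≤ 2 * (((i : ℝ) + 1) * ((i : ℝ) + 2))⁻¹ := by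
            rw [inv_pow, ← one_div, ← div_eq_mul_inv,
              div_le_div_iff₀ (by positivity) (by positivity)]
            nlinarith [(Nat.cast_nonneg i : (0 : ℝ) ≤ i)]
          calc _ ≤ (n.choose i : ℝ) * p ^ i * (1 - p) ^ (n - i) *
                (2 * (((i : ℝ) + 1) * ((i : ℝ) + 2))⁻¹) :=
                mul_le_mul_of_nonneg_left h (by positivity)
            _ = _ := by ring
      _ ≤ 2 * (1 / (((n : ℝ) + 1) * ((n : ℝ) + 2) * p ^ 2)) := by
          rw [← Finset.mul_sum]
          exact mul_le_mul_of_nonneg_left (sum_choose_mul_inv_le n p hp0 hp1) zero_le_two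
      _ = _ := by ring
  refine ⟨hfirst, ?_⟩
  calc (∫ ω, (if 0 < B ω then ((B ω : ℝ) ^ 2)⁻¹ else 0) ∂P)
      ≤ ∫ ω, 4 * ((1 : ℝ) + (B ω : ℝ))⁻¹ ^ 2 ∂P := by
        refine integral_mono hi2 (hi1.const_mul 4) fun ω => ?_
        dsimp only
        split_ifs with h
        · have h' : (1 : ℝ) ≤ B ω := by exact_mod_cast h
          rw [inv_pow, ← one_div, ← div_eq_mul_inv,
            div_le_div_iff₀ (by positivity) (by positivity)]
          nlinarith
        · positivity
    _ = 4 * ∫ ω, ((1 : ℝ) + (B ω : ℝ))⁻¹ ^ 2 ∂P := integral_const_mul _ _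
    _ ≤ 4 * (2 / (((n : ℝ) + 1) * ((n : ℝ) + 2) * p ^ 2)) := by gcongr
    _ = _ := by ring
end
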